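/- Let p be an odd prime and let K be a characteristic-zero field with a multiplicative nonarchimedean norm ‖·‖ such that ‖q‖ equals the p-adic absolute value of q for every rational number q (viewed in K). Let r₀ ≥ 1 be an integer and let s ∈ K satisfy s² = p^{r₀}. Let L, H, h, e₁, e₂ ∈ K with h ≠ 0, L ≠ H, ‖H‖ ≤ 1, ‖e₁‖ ≤ ‖h‖², ‖e₂‖ ≤ ‖h‖², and max(1, ‖L‖)²·‖h‖ < ‖L − H‖. Set a = s·(1 + (L/2)·h + e₁), B = 1 + H·h + e₂, and c = (a² − B·p^{r₀})/(p·a). Then ‖c/h − (s/p)·(L − H)‖ < p^{1 − r₀/2}·‖L − H‖. -/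

import Mathlib

/-- The ultrametric inequality for the norm of a difference. -/
theorem norm_sub_le_max_norm {E : Type*} [SeminormedAddGroup E] [IsUltrametricDist E] (x y : E) :
    ‖x - y‖ ≤ max ‖x‖ ‖y‖ := by
  simpa [sub_eq_add_neg] using IsUltrametricDist.norm_add_le_max x (-y)

/-- If `‖p‖ = p⁻¹` and `s² = p ^ r`, then `‖s / p‖ = p ^ (1 - r / 2)`. -/
theorem norm_div_eq_rpow_of_sq_eq_pow {K : Type*} [NormedField K] {p r : ℕ} (hp : 0 < p)
    (hnorm : ‖(p : K)‖ = (p : ℝ)⁻¹) {s : K} (hs : s ^ 2 = (p : K) ^ r) :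
    ‖s / (p : K)‖ = (p : ℝ) ^ ((1 : ℝ) - (r : ℝ) / 2) := by
  have hp0 : (0 : ℝ) < p := by exact_mod_cast hp
  have hsq : ‖s / (p : K)‖ ^ 2 = ((p : ℝ) ^ ((1 : ℝ) - (r : ℝ) / 2)) ^ 2 := by
    rw [← norm_pow, div_pow, hs, norm_div, norm_pow, norm_pow, hnorm, ← Real.rpow_natCast (_ ^ _),
      ← Real.rpow_mul hp0.le,
      show ((1 : ℝ) - (r : ℝ) / 2) * ((2 : ℕ) : ℝ) = ((2 : ℕ) : ℝ) - (r : ℝ) by push_cast; ring,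
      Real.rpow_sub hp0, Real.rpow_natCast, Real.rpow_natCast]
    simp only [inv_pow]
    field_simp
  exact (pow_left_inj₀ (norm_nonneg _) (Real.rpow_nonneg hp0.le _) two_ne_zero).mp hsq

/-- The second-order remainder of `(1 + w)² - (1 + H h + e₂)`, where `w = (L / 2) h + e₁`, relative
to `(1 + w) h (L - H)`, is bounded by `M² ‖h‖²`. -/
theorem norm_sq_sub_sub_le {K : Type*} [NormedField K] [IsUltrametricDist K]
    {w L H h e₁ e₂ : K} {M : ℝ} (hM : 1 ≤ M) (h2 : ‖(2 : K)‖ = 1)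
    (hw : w = L / 2 * h + e₁) (hwM : ‖w‖ ≤ M * ‖h‖) (hLH : ‖L - H‖ ≤ M)
    (he₁ : ‖e₁‖ ≤ ‖h‖ ^ 2) (he₂ : ‖e₂‖ ≤ ‖h‖ ^ 2) :
    ‖(1 + w) ^ 2 - (1 + H * h + e₂) - (1 + w) * h * (L - H)‖ ≤ M ^ 2 * ‖h‖ ^ 2 := by
  have h20 : (2 : K) ≠ 0 := norm_ne_zero_iff.mp (by rw [h2]; exact one_ne_zero)
  have hexpand : (1 + w) ^ 2 - (1 + H * h + e₂) - (1 + w) * h * (L - H) =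
      (2 * e₁ - e₂) + (w ^ 2 - w * h * (L - H)) := by
    have hlin : 2 * w = L * h + 2 * e₁ := by rw [hw]; field_simp
    linear_combination hlin
  have hhM : ‖h‖ ^ 2 ≤ M ^ 2 * ‖h‖ ^ 2 :=
    le_mul_of_one_le_left (by positivity) (one_le_pow₀ hM)
  rw [hexpand]
  refine (IsUltrametricDist.norm_add_le_max _ _).trans (max_le ?_ ?_)
  · refine (norm_sub_le_max_norm _ _).trans (max_le ?_ (he₂.trans hhM))
    rw [norm_mul, h2, one_mul]
    exact he₁.trans hhM
  · refine (norm_sub_le_max_norm _ _).trans (max_le ?_ ?_)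
    · rw [norm_pow, ← mul_pow]
      gcongr
    · rw [norm_mul, norm_mul]
      calc ‖w‖ * ‖h‖ * ‖L - H‖ ≤ M * ‖h‖ * ‖h‖ * M := by gcongr
        _ = M ^ 2 * ‖h‖ ^ 2 := by ring

/-- Identification of the leading unit of `c/h`: with the hypotheses of the generic-case
valuation computation (odd prime `p`, characteristic-zero field `K` with multiplicative
nonarchimedean norm restricting to the `p`-adic absolute value on `ℚ`, `r₀ ≥ 1`,
`s² = p^{r₀}`, `h ≠ 0`, `L ≠ H`, `‖H‖ ≤ 1`, `‖e₁‖ ≤ ‖h‖²`, `‖e₂‖ ≤ ‖h‖²`,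
`max(1,‖L‖)²·‖h‖ < ‖L − H‖`), setting `a = s(1 + (L/2)h + e₁)`, `B = 1 + Hh + e₂` and
`c = (a² − B·p^{r₀})/(p·a)`, one has `‖c/h − (s/p)(L − H)‖ < p^{1 − r₀/2}·‖L − H‖`. -/
theorem zigzag_stmt_12 (p : ℕ) (hp : p.Prime) (hodd : Odd p)
    {K : Type*} [NormedField K] [CharZero K] [IsUltrametricDist K]
    (hcompat : ∀ q : ℚ, ‖(q : K)‖ = ((padicNorm p q : ℚ) : ℝ))
    (r₀ : ℕ) (hr₀ : 1 ≤ r₀) (s : K) (hs : s ^ 2 = (p : K) ^ r₀)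
    (L H h e₁ e₂ : K) (hh : h ≠ 0) (hLH : L ≠ H) (hH : ‖H‖ ≤ 1)
    (he₁ : ‖e₁‖ ≤ ‖h‖ ^ 2) (he₂ : ‖e₂‖ ≤ ‖h‖ ^ 2)
    (hsmall : (max 1 ‖L‖) ^ 2 * ‖h‖ < ‖L - H‖)
    (a B c : K) (ha : a = s * (1 + (L / 2) * h + e₁)) (hB : B = 1 + H * h + e₂)
    (hc : c = (a ^ 2 - B * (p : K) ^ r₀) / ((p : K) * a)) :
    ‖c / h - (s / (p : K)) * (L - H)‖ < (p : ℝ) ^ ((1 : ℝ) - (r₀ : ℝ) / 2) * ‖L - H‖ := by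
  have : Fact p.Prime := ⟨hp⟩
  have hpK : (p : K) ≠ 0 := Nat.cast_ne_zero.mpr hp.ne_zero
  have hnormp : ‖(p : K)‖ = (p : ℝ)⁻¹ := by
    simpa [padicNorm.padicNorm_p_of_prime] using hcompat p
  have h2 : ‖(2 : K)‖ = 1 := by
    have hp2 : ¬ p ∣ 2 := fun hdvd => by
      rw [(Nat.prime_dvd_prime_iff_eq hp Nat.prime_two).mp hdvd] at hodd
      exact absurd hodd (by decide)
    have hval : padicNorm p ((2 : ℕ) : ℚ) = 1 := (padicNorm.nat_eq_one_iff 2).mpr hp2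
    have hnorm := hcompat ((2 : ℕ) : ℚ)
    rw [hval] at hnorm
    simpa using hnorm
  have hs0 : s ≠ 0 := by
    rintro rfl
    exact pow_ne_zero r₀ hpK (by rw [← hs]; simp)
  have hh0 : 0 < ‖h‖ := norm_pos_iff.mpr hh
  set M : ℝ := max 1 ‖L‖ with hMdef
  have hM1 : 1 ≤ M := le_max_left _ _
  have hLM : ‖L‖ ≤ M := le_max_right _ _
  have hLHM : ‖L - H‖ ≤ M :=
    (norm_sub_le_max_norm _ _).trans (max_le hLM (hH.trans hM1))
  have hMh : M * ‖h‖ < 1 := by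
    by_contra! hge
    nlinarith [mul_le_mul_of_nonneg_left hge (zero_le_one.trans hM1)]
  have hhM : ‖h‖ ≤ M * ‖h‖ := le_mul_of_one_le_left hh0.le hM1
  obtain ⟨w, hw⟩ : ∃ w, w = L / 2 * h + e₁ := ⟨_, rfl⟩
  have hwM : ‖w‖ ≤ M * ‖h‖ := by
    rw [hw]
    refine (IsUltrametricDist.norm_add_le_max _ _).trans (max_le ?_ (he₁.trans ?_))
    · rw [norm_mul, norm_div, h2, div_one]
      gcongr
    · nlinarith
  have hu : ‖1 + w‖ = 1 := by
    have hlt : ‖w‖ < ‖(1 : K)‖ := by rw [norm_one]; exact hwM.trans_lt hMh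
    rw [IsUltrametricDist.norm_add_eq_max_of_norm_ne_norm hlt.ne', max_eq_left hlt.le, norm_one]
  have hu0 : 1 + w ≠ 0 := norm_ne_zero_iff.mp (by rw [hu]; exact one_ne_zero)
  have hfactor : c / h - s / (p : K) * (L - H) = s / (p : K) *
      (((1 + w) ^ 2 - (1 + H * h + e₂) - (1 + w) * h * (L - H)) / ((1 + w) * h)) := by
    rw [hc, ha, hB, add_assoc 1 (L / 2 * h), ← hw, ← hs]
    field_simp
  rw [hfactor, norm_mul, norm_div_eq_rpow_of_sq_eq_pow hp.pos hnormp hs, norm_div, norm_mul, hu,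
    one_mul]
  have hp0 : (0 : ℝ) < p := by exact_mod_cast hp.pos
  refine mul_lt_mul_of_pos_left ?_ (Real.rpow_pos_of_pos hp0 _)
  rw [div_lt_iff₀ hh0]
  calc _ ≤ M ^ 2 * ‖h‖ ^ 2 := norm_sq_sub_sub_le hM1 h2 hw hwM hLHM he₁ he₂
    _ = M ^ 2 * ‖h‖ * ‖h‖ := by ring
    _ < ‖L - H‖ * ‖h‖ := by gcongr
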